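/- arXiv:2210.13902 — 11 statements merged into one kernel-verified Lean document; each statement's English description precedes it below -/
import Mathlib

section
/- Let G₁ = Matrix.fromBlocks a₁ b₁ c₁ d₁ and G₂ = Matrix.fromBlocks a₂ b₂ c₂ d₂ be complex block matrices (aᵢ of size p×p, bᵢ of size p×m, cᵢ of size m×p, dᵢ of size m×m), let z be an m×p complex matrix, and suppose a₁ + b₁*z and a₂ + b₂*(G₁.z) are invertible. Write G₂*G₁ = Matrix.fromBlocks a₃ b₃ c₃ d₃ (so a₃ = a₂*a₁ + b₂*c₁, b₃ = a₂*b₁ + b₂*d₁, c₃ = c₂*a₁ + d₂*c₁, d₃ = c₂*b₁ + d₂*d₁). Then a₃ + b₃*z is invertible and (G₂*G₁).z = G₂.(G₁.z), i.e. (c₃ + d₃*z)*(a₃ + b₃*z)⁻¹ = (c₂ + d₂*(G₁.z))*(a₂ + b₂*(G₁.z))⁻¹. -/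
/-- The complex fractional linear action `G.z = (c + d*z)*(a + b*z)⁻¹` of block matrices
is a group action: `(G₂ * G₁).z = G₂.(G₁.z)`, and the relevant denominator is invertible.
Here `G₂ * G₁ = Matrix.fromBlocks (a₂*a₁ + b₂*c₁) (a₂*b₁ + b₂*d₁) (c₂*a₁ + d₂*c₁) (c₂*b₁ + d₂*d₁)`. -/
theorem fractionalLinear_comp (p m : ℕ)
    (a₁ a₂ : Matrix (Fin p) (Fin p) ℂ) (b₁ b₂ : Matrix (Fin p) (Fin m) ℂ)
    (c₁ c₂ : Matrix (Fin m) (Fin p) ℂ) (d₁ d₂ : Matrix (Fin m) (Fin m) ℂ)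
    (z : Matrix (Fin m) (Fin p) ℂ)
    (h₁ : IsUnit (a₁ + b₁ * z))
    (h₂ : IsUnit (a₂ + b₂ * ((c₁ + d₁ * z) * (a₁ + b₁ * z)⁻¹))) :
    IsUnit ((a₂ * a₁ + b₂ * c₁) + (a₂ * b₁ + b₂ * d₁) * z) ∧
      ((c₂ * a₁ + d₂ * c₁) + (c₂ * b₁ + d₂ * d₁) * z) *
          ((a₂ * a₁ + b₂ * c₁) + (a₂ * b₁ + b₂ * d₁) * z)⁻¹ =
        (c₂ + d₂ * ((c₁ + d₁ * z) * (a₁ + b₁ * z)⁻¹)) *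
          (a₂ + b₂ * ((c₁ + d₁ * z) * (a₁ + b₁ * z)⁻¹))⁻¹ := by
  have hdet : IsUnit (a₁ + b₁ * z).det := (Matrix.isUnit_iff_isUnit_det _).1 h₁
  -- Both blocks of `G₂ * G₁ * (1, z)` are those of `G₂ * (1, G₁.z)` times `a₁ + b₁ * z`,
  -- and this common right factor cancels in the quotient.
  have key : ∀ {n : ℕ} (x : Matrix (Fin n) (Fin p) ℂ) (y : Matrix (Fin n) (Fin m) ℂ),
      (x * a₁ + y * c₁) + (x * b₁ + y * d₁) * z =
        (x + y * ((c₁ + d₁ * z) * (a₁ + b₁ * z)⁻¹)) * (a₁ + b₁ * z) := by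
    intro n x y
    rw [Matrix.add_mul x, Matrix.mul_assoc y, Matrix.nonsing_inv_mul_cancel_right _ _ hdet]
    simp only [Matrix.mul_add, Matrix.add_mul, Matrix.mul_assoc]
    abel
  rw [key a₂ b₂, key c₂ d₂]
  refine ⟨h₂.mul h₁, ?_⟩
  rw [Matrix.mul_inv_rev, ← Matrix.mul_assoc, Matrix.mul_nonsing_inv_cancel_right _ _ hdet]
end

section
/- Let G₁ = Matrix.fromBlocks a₁ b₁ c₁ d₁ and G₂ = Matrix.fromBlocks a₂ b₂ c₂ d₂ be complex block matrices (aᵢ of size p×p, bᵢ of size p×m, cᵢ of size m×p, dᵢ of size m×m), let z be an m×p complex matrix, and suppose a₁ + b₁*z and a₂ + b₂*(G₁.z) are invertible. Write G₂*G₁ = Matrix.fromBlocks a₃ b₃ c₃ d₃. Then the factor J₂ satisfies the cocycle identity J₂(G₂*G₁, z) = J₂(G₂, G₁.z) * J₂(G₁, z), i.e. d₃ − (c₃ + d₃*z)*(a₃ + b₃*z)⁻¹*b₃ = (d₂ − (c₂ + d₂*(G₁.z))*(a₂ + b₂*(G₁.z))⁻¹*b₂) * (d₁ − (c₁ + d₁*z)*(a₁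 + b₁*z)⁻¹*b₁). -/
/-!
Write `w = G₁.z`, `j = J₁(G₁, z)`, `K = J₁(G₂, w)`, `L = c₂ + d₂ * w` and `D = J₂(G₁, z)`.
Since `c₁ + d₁ * z = w * j`, the product `G₂ * G₁` sends the column `(1, z)` to `(K * j, L * j)`.
Its second block column is `(K * b₁ + b₂ * D, L * b₁ + d₂ * D)`.
Substituting both into `J₂(G₂ * G₁, z)`, the terms in `b₁` cancel and `(d₂ - L * K⁻¹ * b₂) * D`
remains.
-/

/-- Cocycle identity for the automorphy factor
`J₂(G, z) = d - (c + d*z)*(a + b*z)⁻¹*b` of the complex fractional linear action: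
`J₂(G₂*G₁, z) = J₂(G₂, G₁.z) * J₂(G₁, z)`, where
`G₂ * G₁ = Matrix.fromBlocks (a₂*a₁ + b₂*c₁) (a₂*b₁ + b₂*d₁) (c₂*a₁ + d₂*c₁) (c₂*b₁ + d₂*d₁)`
and `G₁.z = (c₁ + d₁*z)*(a₁ + b₁*z)⁻¹`. -/
theorem J2_cocycle (p m : ℕ)
    (a₁ a₂ : Matrix (Fin p) (Fin p) ℂ) (b₁ b₂ : Matrix (Fin p) (Fin m) ℂ)
    (c₁ c₂ : Matrix (Fin m) (Fin p) ℂ) (d₁ d₂ : Matrix (Fin m) (Fin m) ℂ)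
    (z : Matrix (Fin m) (Fin p) ℂ)
    (h₁ : IsUnit (a₁ + b₁ * z))
    (h₂ : IsUnit (a₂ + b₂ * ((c₁ + d₁ * z) * (a₁ + b₁ * z)⁻¹))) :
    (c₂ * b₁ + d₂ * d₁) -
        ((c₂ * a₁ + d₂ * c₁) + (c₂ * b₁ + d₂ * d₁) * z) *
          ((a₂ * a₁ + b₂ * c₁) + (a₂ * b₁ + b₂ * d₁) * z)⁻¹ * (a₂ * b₁ + b₂ * d₁) =
      (d₂ - (c₂ + d₂ * ((c₁ + d₁ * z) * (a₁ + b₁ * z)⁻¹)) *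
            (a₂ + b₂ * ((c₁ + d₁ * z) * (a₁ + b₁ * z)⁻¹))⁻¹ * b₂) *
        (d₁ - (c₁ + d₁ * z) * (a₁ + b₁ * z)⁻¹ * b₁) := by
  have hj := (Matrix.isUnit_iff_isUnit_det _).mp h₁
  have hK := (Matrix.isUnit_iff_isUnit_det _).mp h₂
  have hw : (c₁ + d₁ * z) * (a₁ + b₁ * z)⁻¹ * (a₁ + b₁ * z) = c₁ + d₁ * z :=
    Matrix.nonsing_inv_mul_cancel_right _ _ hj
  generalize (c₁ + d₁ * z) * (a₁ + b₁ * z)⁻¹ = w at *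
  have hden : (a₂ * a₁ + b₂ * c₁) + (a₂ * b₁ + b₂ * d₁) * z
      = (a₂ + b₂ * w) * (a₁ + b₁ * z) := by
    rw [add_mul a₂, Matrix.mul_assoc b₂, hw]
    simp only [Matrix.mul_add, Matrix.add_mul, Matrix.mul_assoc]
    abel
  have hnum : (c₂ * a₁ + d₂ * c₁) + (c₂ * b₁ + d₂ * d₁) * z
      = (c₂ + d₂ * w) * (a₁ + b₁ * z) := by
    rw [Matrix.add_mul c₂, Matrix.mul_assoc d₂, hw]
    simp only [Matrix.mul_add, Matrix.add_mul, Matrix.mul_assoc]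
    abel
  have hb : a₂ * b₁ + b₂ * d₁ = (a₂ + b₂ * w) * b₁ + b₂ * (d₁ - w * b₁) := by
    simp only [Matrix.mul_sub, Matrix.add_mul, Matrix.mul_assoc]
    abel
  have hd : c₂ * b₁ + d₂ * d₁ = (c₂ + d₂ * w) * b₁ + d₂ * (d₁ - w * b₁) := by
    simp only [Matrix.mul_sub, Matrix.add_mul, Matrix.mul_assoc]
    abel
  rw [hnum, hden, hb, hd]
  generalize a₂ + b₂ * w = K at *
  generalize c₂ + d₂ * w = L at *
  generalize d₁ - w * b₁ = D at *
  rw [Matrix.mul_inv_rev, ← Matrix.mul_assoc, Matrix.mul_nonsing_inv_cancel_right _ _ hj,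
    Matrix.mul_add, ← Matrix.mul_assoc (L * K⁻¹) K, Matrix.nonsing_inv_mul_cancel_right _ _ hK,
    Matrix.sub_mul, Matrix.mul_assoc (L * K⁻¹) b₂]
  abel
end

section
/- Let a ∈ ℍ, b : Fin n → ℍ, c : Fin n → ℍ, let d be an n×n quaternionic matrix, and let q : Fin n → ℍ satisfy a + b⬝q ≠ 0. Then the 2×2 complex matrix τ(a) + τ(b)*τ(q) = τ(a + b⬝q) is invertible, and τ applied to the quaternionic fractional linear image G.q (viewed as an n×1 quaternionic matrix) equals the complex fractional linear image of τ(q): τ(G.q) = (τ(c) + τ(d)*τ(q)) * (τ(a) + τ(b)*τ(q))⁻¹, where τ(b) is 2×2n, τ(c) and τ(q) are 2n×2, and τ(d) is 2n×2n. -/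
/-!
The map `x ↦ tauEntry x` is a ring homomorphism `ℍ → M₂(ℂ)` (additivity, multiplicativity and the
value at `1` are checked on the four real coordinates). Hence `τ`, which applies it blockwise, is
additive and turns products of quaternionic matrices of compatible sizes into products of complex
matrices. This gives `τ(a) + τ(b) τ(q) = τ(a + b⬝q)`; for a nonzero quaternion `x`, the image of
`x⁻¹` is a two-sided inverse of the image of `x`, which gives invertibility and
`τ(x)⁻¹ = τ(x⁻¹)`, and the formula for `τ(G.q)` is multiplicativity once more.
-/

/-- The complex 2×2 matrix representing a quaternion `x = x₁ + x₂ i + x₃ j + x₄ k`. -/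
noncomputable def tauEntry (x : Quaternion ℝ) : Matrix (Fin 2) (Fin 2) ℂ :=
  !![(x.re : ℂ) - (x.imI : ℂ) * Complex.I, -(x.imJ : ℂ) + (x.imK : ℂ) * Complex.I;
     (x.imJ : ℂ) + (x.imK : ℂ) * Complex.I, (x.re : ℂ) + (x.imI : ℂ) * Complex.I]

/-- The complexification `τ` of a quaternionic matrix. -/
noncomputable def tau {ι κ : Type*} (a : Matrix ι κ (Quaternion ℝ)) :
    Matrix (ι × Fin 2) (κ × Fin 2) ℂ :=
  Matrix.of fun r s => tauEntry (a r.1 s.1) r.2 s.2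

/-- A quaternion viewed as a 1×1 quaternionic matrix. -/
def scal (a : Quaternion ℝ) : Matrix (Fin 1) (Fin 1) (Quaternion ℝ) :=
  Matrix.of fun _ _ => a

/-- A quaternionic vector viewed as a 1×n row matrix. -/
def rowOf {n : ℕ} (b : Fin n → Quaternion ℝ) : Matrix (Fin 1) (Fin n) (Quaternion ℝ) :=
  Matrix.of fun _ j => b j

/-- A quaternionic vector viewed as an n×1 column matrix. -/
def colOf {n : ℕ} (c : Fin n → Quaternion ℝ) : Matrix (Fin n) (Fin 1) (Quaternion ℝ) :=
  Matrix.of fun i _ => c i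

lemma tauEntry_add (x y : Quaternion ℝ) : tauEntry (x + y) = tauEntry x + tauEntry y := by
  ext i j
  fin_cases i <;> fin_cases j <;> simp [tauEntry] <;> ring

lemma tauEntry_mul (x y : Quaternion ℝ) : tauEntry (x * y) = tauEntry x * tauEntry y := by
  ext i j
  fin_cases i <;> fin_cases j <;>
    simp [tauEntry, Matrix.mul_apply, Fin.sum_univ_two, Complex.ext_iff] <;>
    constructor <;> ring

lemma tauEntry_one : tauEntry 1 = 1 := by
  ext i j
  fin_cases i <;> fin_cases j <;>
    simp [tauEntry, Quaternion.re_one, Quaternion.imI_one, Quaternion.imJ_one, Quaternion.imK_one]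

lemma tauEntry_sum {κ : Type*} (s : Finset κ) (f : κ → Quaternion ℝ) :
    tauEntry (∑ k ∈ s, f k) = ∑ k ∈ s, tauEntry (f k) :=
  map_sum (AddMonoidHom.mk' tauEntry tauEntry_add) f s

lemma tau_add {ι κ : Type*} (a b : Matrix ι κ (Quaternion ℝ)) :
    tau (a + b) = tau a + tau b := by
  ext r s
  simp [tau, tauEntry_add]

lemma tau_mul {ι κ μ : Type*} [Fintype κ] (a : Matrix ι κ (Quaternion ℝ))
    (b : Matrix κ μ (Quaternion ℝ)) : tau (a * b) = tau a * tau b := by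
  ext r s
  simp only [tau, Matrix.of_apply, Matrix.mul_apply, tauEntry_sum, tauEntry_mul,
    Matrix.sum_apply, Fintype.sum_prod_type]

lemma tau_scal_one : tau (scal 1) = 1 := by
  ext ⟨r, i⟩ ⟨s, j⟩
  obtain rfl := Subsingleton.elim r s
  simp [tau, scal, tauEntry_one, Matrix.one_apply]

lemma scal_mul (x y : Quaternion ℝ) : scal x * scal y = scal (x * y) := by
  ext1 r s
  simp [scal, Matrix.mul_apply]

lemma tau_scal_mul_inv {x : Quaternion ℝ} (hx : x ≠ 0) :
    tau (scal x) * tau (scal x⁻¹) = 1 := by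
  rw [← tau_mul, scal_mul, mul_inv_cancel₀ hx, tau_scal_one]

/-- Under `τ`, the quaternionic fractional linear transformation
`G.q = (c + d*q)*(a + b⬝q)⁻¹` corresponds to the complex fractional linear transformation:
`τ(a) + τ(b)*τ(q) = τ(a + b⬝q)` is invertible and
`τ(G.q) = (τ(c) + τ(d)*τ(q)) * (τ(a) + τ(b)*τ(q))⁻¹`. -/
theorem tau_fractionalLinear (n : ℕ) (a : Quaternion ℝ) (b c : Fin n → Quaternion ℝ)
    (d : Matrix (Fin n) (Fin n) (Quaternion ℝ)) (q : Fin n → Quaternion ℝ)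
    (h : a + ∑ j, b j * q j ≠ 0) :
    tau (scal a) + tau (rowOf b) * tau (colOf q) = tau (scal (a + ∑ j, b j * q j)) ∧
    IsUnit (tau (scal a) + tau (rowOf b) * tau (colOf q)) ∧
    tau (colOf fun i => (c i + ∑ j, d i j * q j) * (a + ∑ j, b j * q j)⁻¹) =
      (tau (colOf c) + tau d * tau (colOf q)) *
        (tau (scal a) + tau (rowOf b) * tau (colOf q))⁻¹ := by
  have hden : tau (scal a) + tau (rowOf b) * tau (colOf q) =
      tau (scal (a + ∑ j, b j * q j)) := by
    rw [← tau_mul, ← tau_add]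
    rfl
  refine ⟨hden, ?_, ?_⟩
  · rw [hden]
    exact IsUnit.of_mul_eq_one _ (tau_scal_mul_inv h)
  · rw [hden, Matrix.inv_eq_right_inv (tau_scal_mul_inv h), ← tau_mul, ← tau_add, ← tau_mul]
    congr 1
    ext1 r s
    simp [scal, colOf, Matrix.mul_apply]
end

section
/- Let G₁ = Matrix.fromBlocks a₁ b₁ c₁ d₁ and G₂ = Matrix.fromBlocks a₂ b₂ c₂ d₂ be (1+n)×(1+n) quaternionic block matrices (aᵢ ∈ ℍ, bᵢ, cᵢ : Fin n → ℍ, dᵢ n×n quaternionic matrices), let q : Fin n → ℍ, and suppose a₁ + b₁⬝q ≠ 0 and a₂ + b₂⬝(G₁.q) ≠ 0. Write G₂*G₁ = Matrix.fromBlocks a₃ b₃ c₃ d₃ (so a₃ = a₂*a₁ + Σₖ b₂ k * c₁ k, b₃ j = a₂*b₁ j + Σₖ b₂ k * d₁ k j, c₃ i = c₂ i * a₁ + Σₖ d₂ i k * c₁ k, d₃ i j = c₂ i * b₁ j + Σₖ d₂ i k * d₁ k j). Then a₃ + b₃⬝q ≠ 0 and (G₂*G₁).q = G₂.(G₁.q).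 -/
/-! In homogeneous coordinates the transformation sends `(1, q)` to `G₁ (1, q) = (1, G₁.q) * D`,
where `D = a₁ + b₁⬝q` acts by scalars on the right. Hence each row of `G₂ * G₁` applied to `(1, q)`
is the corresponding row of `G₂` applied to `(1, G₁.q)`, times `D` (`qflt_row_mul`). For the first
row this factors the denominator as a product of nonzero quaternions; for the other rows it lets `D`
cancel from the quotient. -/

/-- The quaternionic fractional linear transformation
`G.q = fun i => (c i + ∑ j, d i j * q j) * (a + ∑ j, b j * q j)⁻¹`
associated with the block matrix `G = Matrix.fromBlocks a b c d`. -/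
noncomputable def qflt {n : ℕ} (a : Quaternion ℝ) (b c : Fin n → Quaternion ℝ)
    (d : Matrix (Fin n) (Fin n) (Quaternion ℝ)) (q : Fin n → Quaternion ℝ) :
    Fin n → Quaternion ℝ :=
  fun i => (c i + ∑ j, d i j * q j) * (a + ∑ j, b j * q j)⁻¹

/-- A row `(x, y)` times `G₁`, applied to `(1, q)`, equals the row applied to `(1, G₁.q)`, times
the denominator of `G₁` at `q`. -/
theorem qflt_row_mul {n : ℕ} (a x : Quaternion ℝ) (b c y : Fin n → Quaternion ℝ)
    (d : Matrix (Fin n) (Fin n) (Quaternion ℝ)) (q : Fin n → Quaternion ℝ)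
    (h : a + ∑ j, b j * q j ≠ 0) :
    (x * a + ∑ k, y k * c k) + ∑ j, (x * b j + ∑ k, y k * d k j) * q j
      = (x + ∑ j, y j * qflt a b c d q j) * (a + ∑ j, b j * q j) := by
  have hk : ∀ k, y k * qflt a b c d q k * (a + ∑ j, b j * q j)
      = y k * c k + ∑ j, y k * (d k j * q j) := fun k => by
    rw [qflt, mul_assoc, inv_mul_cancel_right₀ h, mul_add, Finset.mul_sum]
  rw [add_mul x, Finset.sum_mul]
  simp only [hk, add_mul, mul_add, Finset.sum_add_distrib, Finset.mul_sum, Finset.sum_mul,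
    mul_assoc]
  rw [Finset.sum_comm (f := fun k j => y k * (d k j * q j))]
  abel

/-- The quaternionic fractional linear action is a group action:
`(G₂ * G₁).q = G₂.(G₁.q)` and the denominator of `G₂ * G₁` at `q` is nonzero, where
`G₂ * G₁ = Matrix.fromBlocks a₃ b₃ c₃ d₃` with `a₃ = a₂*a₁ + ∑ₖ b₂ k * c₁ k`,
`b₃ j = a₂*b₁ j + ∑ₖ b₂ k * d₁ k j`, `c₃ i = c₂ i * a₁ + ∑ₖ d₂ i k * c₁ k`,
`d₃ i j = c₂ i * b₁ j + ∑ₖ d₂ i k * d₁ k j`. -/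
theorem qflt_comp {n : ℕ} (a₁ a₂ : Quaternion ℝ) (b₁ b₂ c₁ c₂ : Fin n → Quaternion ℝ)
    (d₁ d₂ : Matrix (Fin n) (Fin n) (Quaternion ℝ)) (q : Fin n → Quaternion ℝ)
    (h₁ : a₁ + ∑ j, b₁ j * q j ≠ 0)
    (h₂ : a₂ + ∑ j, b₂ j * qflt a₁ b₁ c₁ d₁ q j ≠ 0) :
    ((a₂ * a₁ + ∑ k, b₂ k * c₁ k) +
        ∑ j, (a₂ * b₁ j + ∑ k, b₂ k * d₁ k j) * q j ≠ 0) ∧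
      qflt (a₂ * a₁ + ∑ k, b₂ k * c₁ k) (fun j => a₂ * b₁ j + ∑ k, b₂ k * d₁ k j)
          (fun i => c₂ i * a₁ + ∑ k, d₂ i k * c₁ k)
          (Matrix.of fun i j => c₂ i * b₁ j + ∑ k, d₂ i k * d₁ k j) q
        = qflt a₂ b₂ c₂ d₂ (qflt a₁ b₁ c₁ d₁ q) := by
  constructor
  · rw [qflt_row_mul a₁ a₂ b₁ c₁ b₂ d₁ q h₁]
    exact mul_ne_zero h₂ h₁
  · funext i
    have hnum := qflt_row_mul a₁ (c₂ i) b₁ c₁ (d₂ i) d₁ q h₁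
    have hden := qflt_row_mul a₁ a₂ b₁ c₁ b₂ d₁ q h₁
    rw [qflt]
    simp only [Matrix.of_apply]
    rw [hnum, hden, mul_inv_rev, mul_assoc, mul_inv_cancel_left₀ h₁, ← qflt]
end

section
/- Let G₁ = Matrix.fromBlocks a₁ b₁ c₁ d₁ and G₂ = Matrix.fromBlocks a₂ b₂ c₂ d₂ be (1+n)×(1+n) quaternionic block matrices (aᵢ ∈ ℍ, bᵢ, cᵢ : Fin n → ℍ, dᵢ n×n quaternionic matrices), let q : Fin n → ℍ with a₁ + b₁⬝q ≠ 0, and write G₂*G₁ = Matrix.fromBlocks a₃ b₃ c₃ d₃. Then the quaternionic factor J₁ satisfies the cocycle identity J₁(G₂*G₁, q) = J₁(G₂, G₁.q) * J₁(G₁, q), i.e. a₃ + b₃⬝q = (a₂ + b₂⬝(G₁.q)) * (a₁ + b₁⬝q) in ℍ. -/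
/-- Cocycle identity for the quaternionic factor `J₁(G, q) = a + b⬝q`:
`J₁(G₂*G₁, q) = J₁(G₂, G₁.q) * J₁(G₁, q)`, where
`G₂ * G₁ = Matrix.fromBlocks a₃ b₃ c₃ d₃` with `a₃ = a₂*a₁ + ∑ₖ b₂ k * c₁ k` and
`b₃ j = a₂*b₁ j + ∑ₖ b₂ k * d₁ k j`. -/
theorem qJ1_cocycle {n : ℕ} (a₁ a₂ : Quaternion ℝ) (b₁ b₂ c₁ c₂ : Fin n → Quaternion ℝ)
    (d₁ d₂ : Matrix (Fin n) (Fin n) (Quaternion ℝ)) (q : Fin n → Quaternion ℝ)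
    (h₁ : a₁ + ∑ j, b₁ j * q j ≠ 0) :
    (a₂ * a₁ + ∑ k, b₂ k * c₁ k) + ∑ j, (a₂ * b₁ j + ∑ k, b₂ k * d₁ k j) * q j =
      (a₂ + ∑ j, b₂ j * qflt a₁ b₁ c₁ d₁ q j) * (a₁ + ∑ j, b₁ j * q j) := by
  -- Multiplying `G₁.q` on the right by `J₁(G₁, q)` clears its denominator.
  have hq : ∀ i, qflt a₁ b₁ c₁ d₁ q i * (a₁ + ∑ j, b₁ j * q j) =
      c₁ i + ∑ j, d₁ i j * q j := fun i => inv_mul_cancel_right₀ h₁ _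
  have hswap : ∑ j, ∑ k, b₂ k * (d₁ k j * q j) = ∑ k, ∑ j, b₂ k * (d₁ k j * q j) :=
    Finset.sum_comm
  rw [add_mul, Finset.sum_mul]
  simp only [mul_assoc, hq]
  simp only [mul_add, add_mul, Finset.mul_sum, Finset.sum_mul, Finset.sum_add_distrib,
    mul_assoc, hswap]
  abel
end

section
/- Let G₁ = Matrix.fromBlocks a₁ b₁ c₁ d₁ and G₂ = Matrix.fromBlocks a₂ b₂ c₂ d₂ be (1+n)×(1+n) quaternionic block matrices (aᵢ ∈ ℍ, bᵢ, cᵢ : Fin n → ℍ, dᵢ n×n quaternionic matrices), let q : Fin n → ℍ, and suppose a₁ + b₁⬝q ≠ 0 and a₂ + b₂⬝(G₁.q) ≠ 0. Write G₂*G₁ = Matrix.fromBlocks a₃ b₃ c₃ d₃. Then the quaternionic factor J₂ satisfies the cocycle identity J₂(G₂*G₁, q) = J₂(G₂, G₁.q) * J₂(G₁, q) as n×n quaternionic matrices. -/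
/-- The quaternionic factor `J₂(G, q)`: the n×n quaternionic matrix with (i,j) entry
`d i j - (c i + ∑ₖ d i k * q k) * (a + b⬝q)⁻¹ * b j`. -/
noncomputable def qJ2 {n : ℕ} (a : Quaternion ℝ) (b c : Fin n → Quaternion ℝ)
    (d : Matrix (Fin n) (Fin n) (Quaternion ℝ)) (q : Fin n → Quaternion ℝ) :
    Matrix (Fin n) (Fin n) (Quaternion ℝ) :=
  Matrix.of fun i j =>
    d i j - (c i + ∑ k, d i k * q k) * (a + ∑ k, b k * q k)⁻¹ * b j

/-- The pairing of the block row `(x, y) G` with the column `(1, q)`, where `G = [a b; c d]`. -/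
theorem row_mul_pair {n : ℕ} (a x : Quaternion ℝ) (b c y : Fin n → Quaternion ℝ)
    (d : Matrix (Fin n) (Fin n) (Quaternion ℝ)) (q : Fin n → Quaternion ℝ)
    (h : a + ∑ j, b j * q j ≠ 0) :
    (x * a + ∑ k, y k * c k) + ∑ j, (x * b j + ∑ k, y k * d k j) * q j
      = (x + ∑ k, y k * qflt a b c d q k) * (a + ∑ j, b j * q j) := by
  have hp : ∀ k, qflt a b c d q k * (a + ∑ j, b j * q j) = c k + ∑ j, d k j * q j := fun k => by
    rw [qflt, mul_assoc, inv_mul_cancel₀ h, mul_one]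
  rw [add_mul x, Finset.sum_mul]
  simp only [mul_assoc, hp]
  simp only [add_mul, mul_add, Finset.sum_add_distrib, Finset.sum_mul, Finset.mul_sum, mul_assoc]
  rw [Finset.sum_comm (f := fun j k => y k * (d k j * q j))]
  abel

/-- The second block of the row `(x, y) G`, where `G = [a b; c d]`,
expressed through `J₂(G, q) = d - (G.q) b`. -/
theorem row_mul_snd {n : ℕ} (a x : Quaternion ℝ) (b c y : Fin n → Quaternion ℝ)
    (d : Matrix (Fin n) (Fin n) (Quaternion ℝ)) (q : Fin n → Quaternion ℝ) (j : Fin n) :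
    x * b j + ∑ k, y k * d k j
      = (x + ∑ k, y k * qflt a b c d q k) * b j + ∑ k, y k * qJ2 a b c d q k j := by
  have hJ : ∀ k, qJ2 a b c d q k j = d k j - qflt a b c d q k * b j := fun k => rfl
  simp only [hJ, add_mul, mul_sub, Finset.sum_sub_distrib, Finset.sum_mul, mul_assoc]
  abel

/-- Cocycle identity for the quaternionic factor `J₂`:
`J₂(G₂*G₁, q) = J₂(G₂, G₁.q) * J₂(G₁, q)` as n×n quaternionic matrices, where
`G₂ * G₁ = Matrix.fromBlocks a₃ b₃ c₃ d₃` with `a₃ = a₂*a₁ + ∑ₖ b₂ k * c₁ k`,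
`b₃ j = a₂*b₁ j + ∑ₖ b₂ k * d₁ k j`, `c₃ i = c₂ i * a₁ + ∑ₖ d₂ i k * c₁ k`,
`d₃ i j = c₂ i * b₁ j + ∑ₖ d₂ i k * d₁ k j`. -/
theorem qJ2_cocycle {n : ℕ} (a₁ a₂ : Quaternion ℝ) (b₁ b₂ c₁ c₂ : Fin n → Quaternion ℝ)
    (d₁ d₂ : Matrix (Fin n) (Fin n) (Quaternion ℝ)) (q : Fin n → Quaternion ℝ)
    (h₁ : a₁ + ∑ j, b₁ j * q j ≠ 0)
    (h₂ : a₂ + ∑ j, b₂ j * qflt a₁ b₁ c₁ d₁ q j ≠ 0) :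
    qJ2 (a₂ * a₁ + ∑ k, b₂ k * c₁ k) (fun j => a₂ * b₁ j + ∑ k, b₂ k * d₁ k j)
        (fun i => c₂ i * a₁ + ∑ k, d₂ i k * c₁ k)
        (Matrix.of fun i j => c₂ i * b₁ j + ∑ k, d₂ i k * d₁ k j) q
      = qJ2 a₂ b₂ c₂ d₂ (qflt a₁ b₁ c₁ d₁ q) * qJ2 a₁ b₁ c₁ d₁ q := by
  ext1 i j
  rw [Matrix.mul_apply]
  have hsum : ∀ k, qJ2 a₂ b₂ c₂ d₂ (qflt a₁ b₁ c₁ d₁ q) i k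
      = d₂ i k - (c₂ i + ∑ k, d₂ i k * qflt a₁ b₁ c₁ d₁ q k)
        * (a₂ + ∑ k, b₂ k * qflt a₁ b₁ c₁ d₁ q k)⁻¹ * b₂ k := fun k => rfl
  simp only [hsum]
  rw [qJ2]
  simp only [Matrix.of_apply]
  rw [row_mul_pair a₁ (c₂ i) b₁ c₁ (d₂ i) d₁ q h₁, row_mul_pair a₁ a₂ b₁ c₁ b₂ d₁ q h₁,
    row_mul_snd a₁ (c₂ i) b₁ c₁ (d₂ i) d₁ q j, row_mul_snd a₁ a₂ b₁ c₁ b₂ d₁ q j]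
  generalize c₂ i + ∑ k, d₂ i k * qflt a₁ b₁ c₁ d₁ q k = s
  generalize a₂ + ∑ k, b₂ k * qflt a₁ b₁ c₁ d₁ q k = r₂ at h₂ ⊢
  generalize a₁ + ∑ j, b₁ j * q j = r₁ at h₁ ⊢
  have hinv : s * r₁ * (r₂ * r₁)⁻¹ = s * r₂⁻¹ := by
    rw [mul_inv_rev, mul_assoc, mul_inv_cancel_left₀ h₁]
  have hs : s * r₂⁻¹ * (r₂ * b₁ j) = s * b₁ j := by
    rw [mul_assoc, inv_mul_cancel_left₀ h₂]
  rw [hinv, mul_add, hs]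
  simp only [sub_mul, Finset.sum_sub_distrib, Finset.mul_sum, mul_assoc]
  abel
end

section
/- Let a, b, c, d be complex matrices of sizes p×p, p×m, m×p, m×m respectively, and let z be an m×p complex matrix with a + b*z invertible. Then det (Matrix.fromBlocks a b c d) = det (a + b*z) * det (d − (c + d*z)*(a + b*z)⁻¹*b); in particular, if Matrix.fromBlocks a b c d is invertible then so is the matrix d − (c + d*z)*(a + b*z)⁻¹*b. -/
/-- With `a + b*z` invertible, `det (fromBlocks a b c d)` factors as
`det (a + b*z) * det (d - (c + d*z)*(a + b*z)⁻¹*b)`; in particular, if the block matrix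
is invertible then so is `d - (c + d*z)*(a + b*z)⁻¹*b`. -/
theorem det_fromBlocks_of_isUnit (p m : ℕ)
    (a : Matrix (Fin p) (Fin p) ℂ) (b : Matrix (Fin p) (Fin m) ℂ)
    (c : Matrix (Fin m) (Fin p) ℂ) (d : Matrix (Fin m) (Fin m) ℂ)
    (z : Matrix (Fin m) (Fin p) ℂ) (h : IsUnit (a + b * z)) :
    (Matrix.fromBlocks a b c d).det =
        (a + b * z).det * (d - (c + d * z) * (a + b * z)⁻¹ * b).det ∧
      (IsUnit (Matrix.fromBlocks a b c d) →
        IsUnit (d - (c + d * z) * (a + b * z)⁻¹ * b)) := by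
  have hdet : (Matrix.fromBlocks a b c d).det =
      (a + b * z).det * (d - (c + d * z) * (a + b * z)⁻¹ * b).det := by
    -- Right multiplication by the unipotent `[1 0; z 1]` adds the second block column times `z`
    -- to the first, so `a + b * z` becomes the top-left block and its Schur complement applies.
    have hmul : Matrix.fromBlocks a b c d * Matrix.fromBlocks 1 0 z 1 =
        Matrix.fromBlocks (a + b * z) b (c + d * z) d := by
      simp [Matrix.fromBlocks_multiply]
    have hdet_mul := congrArg Matrix.det hmul
    let := h.invertible
    rw [Matrix.det_mul, Matrix.det_fromBlocks_zero₁₂, Matrix.det_one, Matrix.det_one, mul_one,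
      mul_one, Matrix.det_fromBlocks₁₁ (a + b * z), Matrix.invOf_eq_nonsing_inv] at hdet_mul
    exact hdet_mul
  refine ⟨hdet, fun hM => ?_⟩
  rw [Matrix.isUnit_iff_isUnit_det, hdet] at hM
  rw [Matrix.isUnit_iff_isUnit_det]
  exact isUnit_of_mul_isUnit_right hM
end

section
/- Let G = Matrix.fromBlocks a b c d be a (1+n)×(1+n) quaternionic block matrix (a ∈ ℍ, b, c : Fin n → ℍ, d an n×n quaternionic matrix) which is invertible in the ring of quaternionic matrices, and let q : Fin n → ℍ satisfy a + b⬝q ≠ 0. Then the n×n quaternionic matrix J₂(G, q) = d − (c + d*q)*(a + b⬝q)⁻¹*b (with (i,j) entry d i j − (c i + Σₖ d i k * q k) * (a + b⬝q)⁻¹ * b j) is invertible in the ring of n×n quaternionic matrices. -/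
section Blocks

variable {R m n : Type*} [Ring R] [Fintype m] [Fintype n] [DecidableEq m] [DecidableEq n]

theorem isUnit_fromBlocks_one_zero (X : Matrix n m R) :
    IsUnit (Matrix.fromBlocks (1 : Matrix m m R) 0 X (1 : Matrix n n R)) :=
  isUnit_iff_exists.mpr ⟨Matrix.fromBlocks 1 0 (-X) 1, by simp [Matrix.fromBlocks_multiply],
    by simp [Matrix.fromBlocks_multiply]⟩

theorem isUnit_of_isUnit_fromBlocks_one {J : Matrix n n R}
    (h : IsUnit (Matrix.fromBlocks (1 : Matrix m m R) 0 0 J)) : IsUnit J := by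
  obtain ⟨N, hl, hr⟩ := isUnit_iff_exists.mp h
  rw [← Matrix.fromBlocks_toBlocks N, Matrix.fromBlocks_multiply, ← Matrix.fromBlocks_one,
    Matrix.fromBlocks_inj] at hl hr
  exact isUnit_iff_exists.mpr
    ⟨N.toBlocks₂₂, by simpa using hl.2.2.2, by simpa using hr.2.2.2⟩

/-- Invertibility of the Schur complement of `A + B * Q`, whose two-sided inverse is `S`, in the
matrix obtained from `[A, B; C, D]` by adding the second block column times `Q` to the first. -/
theorem isUnit_schur_of_isUnit_fromBlocks {A : Matrix m m R} {B : Matrix m n R}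
    {C : Matrix n m R} {D : Matrix n n R} (Q : Matrix n m R) (S : Matrix m m R)
    (hG : IsUnit (Matrix.fromBlocks A B C D))
    (h₁ : (A + B * Q) * S = 1) (h₂ : S * (A + B * Q) = 1) :
    IsUnit (D - (C + D * Q) * S * B) := by
  have hV : IsUnit (Matrix.fromBlocks S (-(S * B)) 0 (1 : Matrix n n R)) :=
    isUnit_iff_exists.mpr ⟨Matrix.fromBlocks (A + B * Q) B 0 1,
      by simp [Matrix.fromBlocks_multiply, h₂],
      by simp [Matrix.fromBlocks_multiply, h₁, ← Matrix.mul_assoc]⟩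
  have key : Matrix.fromBlocks (1 : Matrix m m R) 0 (-((C + D * Q) * S)) (1 : Matrix n n R) *
      (Matrix.fromBlocks A B C D * Matrix.fromBlocks 1 0 Q 1 *
        Matrix.fromBlocks S (-(S * B)) 0 1) =
      Matrix.fromBlocks 1 0 0 (D - (C + D * Q) * S * B) := by
    simp only [Matrix.fromBlocks_multiply, Matrix.mul_one, Matrix.one_mul, Matrix.mul_zero,
      Matrix.zero_mul, add_zero, zero_add, Matrix.mul_neg, ← Matrix.mul_assoc, h₁]
    simp [sub_eq_neg_add, add_comm]
  apply isUnit_of_isUnit_fromBlocks_one (m := m)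
  rw [← key]
  exact (isUnit_fromBlocks_one_zero _).mul ((hG.mul (isUnit_fromBlocks_one_zero Q)).mul hV)

end Blocks

/-- If the quaternionic block matrix `G = Matrix.fromBlocks a b c d` is invertible and
`a + b⬝q ≠ 0`, then the quaternionic factor
`J₂(G, q) = d - (c + d*q)*(a + b⬝q)⁻¹*b` is an invertible n×n quaternionic matrix. -/
theorem qJ2_isUnit {n : ℕ} (a : Quaternion ℝ) (b c : Fin n → Quaternion ℝ)
    (d : Matrix (Fin n) (Fin n) (Quaternion ℝ)) (q : Fin n → Quaternion ℝ)
    (hG : IsUnit (Matrix.fromBlocks (scal a) (rowOf b) (colOf c) d))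
    (hq : a + ∑ j, b j * q j ≠ 0) :
    IsUnit (Matrix.of fun i j =>
      d i j - (c i + ∑ k, d i k * q k) * (a + ∑ k, b k * q k)⁻¹ * b j) := by
  have hs : scal a + rowOf b * colOf q = scal (a + ∑ j, b j * q j) := by
    ext1 i j
    simp [scal, rowOf, colOf, Matrix.mul_apply]
  have hmul : ∀ x y, scal x * scal y = scal (x * y) := fun x y => by
    ext1 i j
    simp [scal, Matrix.mul_apply]
  have hone : scal 1 = 1 := by
    ext1 i j
    rw [Subsingleton.elim i j, Matrix.one_apply_eq]
    rfl
  have h := isUnit_schur_of_isUnit_fromBlocks (colOf q) (scal (a + ∑ j, b j * q j)⁻¹) hG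
    (by rw [hs, hmul, mul_inv_cancel₀ hq, hone]) (by rw [hs, hmul, inv_mul_cancel₀ hq, hone])
  convert h using 1
  ext1 i j
  simp [scal, rowOf, colOf, Matrix.mul_apply]
end

section
/- Let a, b, c, d be complex matrices of sizes p×p, p×m, m×p, m×m respectively, and let z₀ be an m×p complex matrix with a + b*z₀ invertible. Then the map T : Matrix (Fin m) (Fin p) ℂ → Matrix (Fin m) (Fin p) ℂ, T(z) = (c + d*z)*(a + b*z)⁻¹, has Fréchet derivative (over ℂ) at z₀ equal to the continuous linear map H ↦ (d − (c + d*z₀)*(a + b*z₀)⁻¹*b) * H * (a + b*z₀)⁻¹. -/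
/-!
Write `T z = (c + d z)(a + b z)⁻¹` and `M = d - T z₀ b`. Whenever `a + b z` is invertible there is
the exact identity `T z - T z₀ = M (z - z₀) (a + b z)⁻¹` (`fractionalLinear_sub`). Invertibility
persists near `z₀`, so the remainder of the linear approximation `M (z - z₀) (a + b z₀)⁻¹` is
`M (z - z₀) ((a + b z)⁻¹ - (a + b z₀)⁻¹)`. Its entries are finite sums of products of an
`O(z - z₀)` factor and an `o(1)` factor, the latter by continuity of matrix inversion at an
invertible matrix. No derivative of the inverse is needed.
-/

attribute [local instance] Matrix.normedAddCommGroup Matrix.normedSpace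

/-- The candidate derivative of the fractional linear transformation at `z₀`:
the continuous linear map `H ↦ (d - (c + d*z₀)*(a + b*z₀)⁻¹*b) * H * (a + b*z₀)⁻¹`. -/
noncomputable def fltDerivCLM (p m : ℕ)
    (M : Matrix (Fin m) (Fin m) ℂ) (N : Matrix (Fin p) (Fin p) ℂ) :
    Matrix (Fin m) (Fin p) ℂ →L[ℂ] Matrix (Fin m) (Fin p) ℂ :=
  LinearMap.toContinuousLinearMap
    { toFun := fun H => M * H * N
      map_add' := fun x y => by simp [Matrix.mul_add, Matrix.add_mul]
      map_smul' := fun r x => by simp [Matrix.mul_smul, Matrix.smul_mul] }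

theorem fractionalLinear_sub {p m : ℕ}
    (a : Matrix (Fin p) (Fin p) ℂ) (b : Matrix (Fin p) (Fin m) ℂ)
    (c : Matrix (Fin m) (Fin p) ℂ) (d : Matrix (Fin m) (Fin m) ℂ)
    (z₀ z : Matrix (Fin m) (Fin p) ℂ) (h₀ : IsUnit (a + b * z₀).det)
    (h : IsUnit (a + b * z).det) :
    (c + d * z) * (a + b * z)⁻¹ - (c + d * z₀) * (a + b * z₀)⁻¹ =
      (d - (c + d * z₀) * (a + b * z₀)⁻¹ * b) * (z - z₀) * (a + b * z)⁻¹ := by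
  have key : (c + d * z) - (c + d * z₀) * (a + b * z₀)⁻¹ * (a + b * z) =
      (d - (c + d * z₀) * (a + b * z₀)⁻¹ * b) * (z - z₀) := by
    have e : a + b * z = (a + b * z₀) + b * (z - z₀) := by
      rw [Matrix.mul_sub]; abel
    rw [e, Matrix.mul_add, Matrix.nonsing_inv_mul_cancel_right _ _ h₀, Matrix.sub_mul,
      Matrix.mul_sub d, Matrix.mul_assoc _ b]
    abel
  rw [← key, Matrix.sub_mul, Matrix.mul_nonsing_inv_cancel_right _ _ h]

open scoped Asymptotics

/-- The fractional linear transformation `T(z) = (c + d*z)*(a + b*z)⁻¹` has Fréchet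
derivative at `z₀` given by `H ↦ (d - (c + d*z₀)*(a + b*z₀)⁻¹*b) * H * (a + b*z₀)⁻¹`. -/
theorem hasFDerivAt_fractionalLinear (p m : ℕ)
    (a : Matrix (Fin p) (Fin p) ℂ) (b : Matrix (Fin p) (Fin m) ℂ)
    (c : Matrix (Fin m) (Fin p) ℂ) (d : Matrix (Fin m) (Fin m) ℂ)
    (z₀ : Matrix (Fin m) (Fin p) ℂ) (h : IsUnit (a + b * z₀)) :
    HasFDerivAt (fun z : Matrix (Fin m) (Fin p) ℂ => (c + d * z) * (a + b * z)⁻¹)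
      (fltDerivCLM p m (d - (c + d * z₀) * (a + b * z₀)⁻¹ * b) ((a + b * z₀)⁻¹)) z₀ := by
  have h₀ : IsUnit (a + b * z₀).det := (Matrix.isUnit_iff_isUnit_det _).1 h
  have hcont : Continuous fun z : Matrix (Fin m) (Fin p) ℂ => a + b * z := by fun_prop
  have hdet : ∀ᶠ z in nhds z₀, IsUnit (a + b * z).det := by
    filter_upwards [hcont.matrix_det.continuousAt.eventually_ne h₀.ne_zero] with z hz
    exact hz.isUnit
  have hinv : ContinuousAt (fun z : Matrix (Fin m) (Fin p) ℂ => (a + b * z)⁻¹) z₀ := by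
    refine ContinuousAt.comp (f := fun z => a + b * z) (g := fun A => A⁻¹) ?_ hcont.continuousAt
    refine continuousAt_matrix_inv _ ?_
    exact NormedRing.inverse_continuousAt h₀.unit
  set M := d - (c + d * z₀) * (a + b * z₀)⁻¹ * b with hM
  have hrem : (fun z => M * (z - z₀) * ((a + b * z)⁻¹ - (a + b * z₀)⁻¹)) =o[nhds z₀]
      fun z => z - z₀ := by
    refine Asymptotics.isLittleO_pi.2 fun i => Asymptotics.isLittleO_pi.2 fun j => ?_
    change (fun z => ∑ k, (M * (z - z₀)) i k * ((a + b * z)⁻¹ - (a + b * z₀)⁻¹) k j) =o[nhds z₀]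
      fun z => z - z₀
    refine Asymptotics.IsLittleO.fun_sum fun k _ => ?_
    have hO : (fun z => (M * (z - z₀)) i k) =O[nhds z₀] fun z => z - z₀ := by
      simp only [Matrix.mul_apply]
      refine Asymptotics.IsBigO.fun_sum fun l _ => Asymptotics.IsBigO.const_mul_left ?_ _
      exact Asymptotics.isBigO_of_le _ fun z => Matrix.norm_entry_le_entrywise_sup_norm _
    have ho : (fun z => ((a + b * z)⁻¹ - (a + b * z₀)⁻¹) k j) =o[nhds z₀]
        fun _ => (1 : ℝ) := by
      rw [Asymptotics.isLittleO_one_iff]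
      have := ((continuous_id.matrix_elem k j).continuousAt.comp hinv).tendsto.sub_const
        ((a + b * z₀)⁻¹ k j)
      simpa using this
    simpa using hO.norm_right.mul_isLittleO ho
  refine HasFDerivAt.of_isLittleO (hrem.congr' ?_ Filter.EventuallyEq.rfl)
  filter_upwards [hdet] with z hz
  rw [fractionalLinear_sub a b c d z₀ z h₀ hz, Matrix.mul_sub]
  rfl
end

section
/- Let P be an m×m complex matrix and Q a p×p complex matrix, and consider the ℂ-linear endomorphism L of the space Matrix (Fin m) (Fin p) ℂ given by L(H) = P*H*Q. Then LinearMap.det of L equals (det P)^p * (det Q)^m. -/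
/-!
Stacking the columns of `H` identifies `H ↦ P * H * Q` with multiplication by the Kronecker
product `Qᵀ ⊗ P`, because `vec (P * H * Q) = (Qᵀ ⊗ P) *ᵥ vec H`. The determinant is invariant under
this identification, and `det (Qᵀ ⊗ P) = (det Q) ^ m * (det P) ^ p`.
-/

/-- The ℂ-linear endomorphism `H ↦ P*H*Q` of `Matrix (Fin m) (Fin p) ℂ`. -/
noncomputable def kroneckerMap' (m p : ℕ)
    (P : Matrix (Fin m) (Fin m) ℂ) (Q : Matrix (Fin p) (Fin p) ℂ) :
    Matrix (Fin m) (Fin p) ℂ →ₗ[ℂ] Matrix (Fin m) (Fin p) ℂ where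
  toFun H := P * H * Q
  map_add' x y := by simp [Matrix.mul_add, Matrix.add_mul]
  map_smul' r x := by simp [Matrix.mul_smul, Matrix.smul_mul]

/-- The determinant of the endomorphism `H ↦ P*H*Q` of `Matrix (Fin m) (Fin p) ℂ`
equals `(det P)^p * (det Q)^m`. -/
theorem det_kroneckerMap' (m p : ℕ)
    (P : Matrix (Fin m) (Fin m) ℂ) (Q : Matrix (Fin p) (Fin p) ℂ) :
    LinearMap.det (kroneckerMap' m p P Q) = P.det ^ p * Q.det ^ m := by
  -- Column-stacking as a linear equivalence.
  let e : Matrix (Fin m) (Fin p) ℂ ≃ₗ[ℂ] (Fin p × Fin m → ℂ) :=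
    LinearEquiv.ofBijective
      { toFun := Matrix.vec, map_add' := Matrix.vec_add, map_smul' := Matrix.vec_smul }
      Matrix.vec_bijective
  have h : (e : _ →ₗ[ℂ] _) ∘ₗ kroneckerMap' m p P Q ∘ₗ (e.symm : _ →ₗ[ℂ] _)
      = Matrix.toLin' (Matrix.kroneckerMap (· * ·) Q.transpose P) := by
    refine LinearMap.ext fun v => ?_
    obtain ⟨H, rfl⟩ := e.surjective v
    simp only [LinearMap.comp_apply, LinearEquiv.coe_coe, LinearEquiv.symm_apply_apply,
      Matrix.toLin'_apply]
    exact (Matrix.kronecker_mulVec_vec P H Q.transpose).symm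
  rw [← LinearMap.det_conj _ e, h, LinearMap.det_toLin', Matrix.det_kronecker,
    Matrix.det_transpose, Fintype.card_fin, Fintype.card_fin, mul_comm]
end

section
/- Let n ≥ 1, a ∈ ℍ, and b : Fin n → ℍ, and let U = {q : Fin n → ℍ | a + b⬝q ≠ 0}. Define p : (Fin n → ℍ) → ℍ by p(q) = a + b⬝q and define G : (Fin n → ℍ) → Matrix (Fin 2) (Fin 2) ℂ on U by G(q) = (Quaternion.normSq (p q))⁻¹ • (τ(p q))⁻¹. For q ∈ U, l ∈ Fin n and u ∈ {1, i, j, k} ⊆ ℍ, write ∂_{l,u} for the directional derivative f ↦ fderiv ℝ f q (Pi.single l u) of ℂ-valued functions on Fin n → ℍ. Then for every q ∈ U, every l ∈ Fin n, and every column index C ∈ Fin 2, the entry functions G_{B,C} (B ∈ Fin 2) satisfy the two 1-Cauchy–Fueter equations: (∂_{l,1} G_{1,C})(q) + I*(∂_{l,i} G_{1,C})(q) + (∂_{l,j} G_{0,C})(q) + I*(∂_{l,k} G_{0,C})(q) = 0, and (∂_{l,j} G_{1,C})(q) − I*(∂_{l,k} G_{1,C})(q) − (∂_{l,1} G_{0,C})(q)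 + I*(∂_{l,i} G_{0,C})(q) = 0. (This expresses that the rational function |a + b⬝q|^{−2}(a + b⬝q)^{−1} is 1-regular, i.e. annihilated by the 1-Cauchy–Fueter operator ∇_{A0'}G_{1'} − ∇_{A1'}G_{0'} = 0 for A = 0,…,2n−1.) -/
/-!
Write `p = a + ∑ j, b j * q j`. The adjugate of `τ(x)` is `τ(star x)` and its determinant is
`|x|²`, so `G = |p|⁻⁴ τ(star p)` (`Gmap_apply`). Since `p` is real-affine in `q` and moves by
`b l * u` in the direction `(l, u)`, the product rule gives (`pd_Gmap`)
`∂_{l,u} G = |p|⁻⁶ (|p|² τ(star (b l * u)) - 4 ⟪p, b l * u⟫ τ(star p))`.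
In both Cauchy–Fueter expressions the brackets then add up to zero, as a polynomial identity in
the real components of `p` and `b l`. Conceptually, the two equations together read
`∑ u, τ(u) ∂_{l,u} G = 0` over `u = 1, i, j, k`, and by multiplicativity of `τ` this reduces to
`∑ u, u * star u = 4` and `∑ u, ⟪p, b l * u⟫ u = star (b l) * p`.
-/

/-- The complex 2×2 matrix representing a quaternion `x = x₁ + x₂ i + x₃ j + x₄ k`. -/
noncomputable def tauQ (x : Quaternion ℝ) : Matrix (Fin 2) (Fin 2) ℂ :=
  !![(x.re : ℂ) - (x.imI : ℂ) * Complex.I, -(x.imJ : ℂ) + (x.imK : ℂ) * Complex.I;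
     (x.imJ : ℂ) + (x.imK : ℂ) * Complex.I, (x.re : ℂ) + (x.imI : ℂ) * Complex.I]

/-- `G(q) = |a + b⬝q|⁻² • (τ(a + b⬝q))⁻¹`, the 2×2-matrix-valued rational function whose
columns are the basic `k`-regular rational functions. -/
noncomputable def Gmap {n : ℕ} (a : Quaternion ℝ) (b : Fin n → Quaternion ℝ)
    (q : Fin n → Quaternion ℝ) : Matrix (Fin 2) (Fin 2) ℂ :=
  (Quaternion.normSq (a + ∑ j, b j * q j))⁻¹ • (tauQ (a + ∑ j, b j * q j))⁻¹

/-- The directional derivative `∂_{l,u} f (q) = fderiv ℝ f q (Pi.single l u)` of a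
ℂ-valued function on `Fin n → ℍ`, in the real coordinate direction `u ∈ ℍ` of the `l`-th
quaternionic variable. -/
noncomputable def pd {n : ℕ} (l : Fin n) (u : Quaternion ℝ)
    (f : (Fin n → Quaternion ℝ) → ℂ) (q : Fin n → Quaternion ℝ) : ℂ :=
  fderiv ℝ f q (Pi.single l u)

/-- The `(B, C)` entry of `τ(star x)`, as a real-linear function of `x`. -/
noncomputable def tauStarEntry (B C : Fin 2) : Quaternion ℝ →ₗ[ℝ] ℂ where
  toFun x := tauQ (star x) B C
  map_add' x y := by
    fin_cases B <;> fin_cases C <;> simp [tauQ] <;> ring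
  map_smul' r x := by
    fin_cases B <;> fin_cases C <;> simp [tauQ] <;> ring

lemma tauStarEntry_apply (B C : Fin 2) (x : Quaternion ℝ) :
    tauStarEntry B C x = tauQ (star x) B C := rfl

lemma det_tauQ (x : Quaternion ℝ) : (tauQ x).det = ((Quaternion.normSq x : ℝ) : ℂ) := by
  rw [Matrix.det_fin_two, Quaternion.normSq_def']
  apply Complex.ext <;> simp [tauQ, pow_two] <;> ring

lemma adjugate_tauQ (x : Quaternion ℝ) : (tauQ x).adjugate = tauQ (star x) := by
  rw [Matrix.adjugate_fin_two]
  ext B C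
  fin_cases B <;> fin_cases C <;> simp [tauQ] <;> ring

/-- This closed form also holds where `a + b⬝w = 0`, both sides being zero there. -/
lemma Gmap_apply {n : ℕ} (a : Quaternion ℝ) (b w : Fin n → Quaternion ℝ) (B C : Fin 2) :
    Gmap a b w B C = ((((‖a + ∑ j, b j * w j‖ ^ 2) ^ 2)⁻¹ : ℝ) : ℂ)
      * tauStarEntry B C (a + ∑ j, b j * w j) := by
  simp only [Gmap, Matrix.inv_def, adjugate_tauQ, det_tauQ, tauStarEntry_apply,
    Quaternion.normSq_eq_norm_mul_self, Ring.inverse_eq_inv', Matrix.smul_apply, smul_eq_mul,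
    Complex.real_smul]
  push_cast
  rw [← mul_assoc, ← mul_inv]
  congr 2
  ring

lemma pd_Gmap {n : ℕ} (a : Quaternion ℝ) (b q : Fin n → Quaternion ℝ) (l : Fin n)
    (B C : Fin 2) {p : Quaternion ℝ} (hp : a + ∑ j, b j * q j = p) (hp0 : p ≠ 0)
    (u : Quaternion ℝ) :
    pd l u (fun w => Gmap a b w B C) q = (((‖p‖ ^ 2) ^ 3)⁻¹ : ℝ)
      * ((Quaternion.normSq p : ℝ) * tauQ (star (b l * u)) B C
        - 4 * (inner ℝ p (b l * u) : ℝ) * tauQ (star p) B C) := by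
  have hN : ‖p‖ ≠ 0 := norm_ne_zero_iff.mpr hp0
  have hP : HasFDerivAt (fun w : Fin n → Quaternion ℝ => a + ∑ j, b j * w j)
      (∑ j, (ContinuousLinearMap.mul ℝ (Quaternion ℝ) (b j)).comp
        (ContinuousLinearMap.proj (R := ℝ) (φ := fun _ : Fin n => Quaternion ℝ) j)) q := by
    refine HasFDerivAt.const_add a (HasFDerivAt.fun_sum fun j _ => ?_)
    exact ((ContinuousLinearMap.mul ℝ (Quaternion ℝ) (b j)).comp
      (ContinuousLinearMap.proj (R := ℝ) (φ := fun _ : Fin n => Quaternion ℝ) j)).hasFDerivAt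
  have hsum : ∑ j, b j * (Pi.single l u : Fin n → Quaternion ℝ) j = b l * u := by
    rw [Finset.sum_eq_single l]
    · simp
    · intro j _ hj
      simp [hj]
    · simp
  have hD : HasDerivAt (fun t : ℝ => (t ^ 2)⁻¹) (-(2 * ‖p‖ ^ 2) / ((‖p‖ ^ 2) ^ 2) ^ 2)
      (‖a + ∑ j, b j * q j‖ ^ 2) := by
    rw [hp]
    simpa using (hasDerivAt_pow 2 (‖p‖ ^ 2)).fun_inv (by positivity)
  have h1 := hD.comp_hasFDerivAt q hP.norm_sq
  have h2 := (Complex.ofRealCLM.hasFDerivAt).comp q h1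
  have h3 := ((tauStarEntry B C).toContinuousLinearMap.hasFDerivAt).comp q hP
  have h4 := h2.mul h3
  have hfun : (fun w => Gmap a b w B C) = fun w => ((((‖a + ∑ j, b j * w j‖ ^ 2) ^ 2)⁻¹ : ℝ) : ℂ)
      * tauStarEntry B C (a + ∑ j, b j * w j) := funext fun w => Gmap_apply a b w B C
  replace h4 := h4.congr_of_eventuallyEq (Filter.EventuallyEq.of_eq hfun)
  rw [pd, h4.fderiv, Quaternion.normSq_eq_norm_mul_self]
  simp [hp, hsum, tauStarEntry_apply]
  have hN' : (‖p‖ : ℂ) ≠ 0 := by exact_mod_cast hN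
  field_simp
  ring

/-- The Cauchy–Fueter equations, with the units `i`, `j`, `k` described by their components. -/
lemma cauchyFueter_of_units {n : ℕ} (a : Quaternion ℝ) (b q : Fin n → Quaternion ℝ)
    (hq : a + ∑ j, b j * q j ≠ 0) (l : Fin n) (C : Fin 2) {i j k : Quaternion ℝ}
    (hi : i.re = 0 ∧ i.imI = 1 ∧ i.imJ = 0 ∧ i.imK = 0)
    (hj : j.re = 0 ∧ j.imI = 0 ∧ j.imJ = 1 ∧ j.imK = 0)
    (hk : k.re = 0 ∧ k.imI = 0 ∧ k.imJ = 0 ∧ k.imK = 1) :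
    (pd l 1 (fun w => Gmap a b w 1 C) q
        + Complex.I * pd l i (fun w => Gmap a b w 1 C) q
        + pd l j (fun w => Gmap a b w 0 C) q
        + Complex.I * pd l k (fun w => Gmap a b w 0 C) q = 0) ∧
      (pd l j (fun w => Gmap a b w 1 C) q
        - Complex.I * pd l k (fun w => Gmap a b w 1 C) q
        - pd l 1 (fun w => Gmap a b w 0 C) q
        + Complex.I * pd l i (fun w => Gmap a b w 0 C) q = 0) := by
  simp only [pd_Gmap a b q l _ C rfl hq]
  generalize a + ∑ j, b j * q j = p
  generalize b l = c
  -- The scalar factor `|p|⁻⁶` is common to all terms, so its value is irrelevant.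
  generalize (((‖p‖ ^ 2) ^ 3)⁻¹ : ℝ) = m
  simp only [Quaternion.inner_def, Quaternion.normSq_def']
  fin_cases C <;> constructor <;> apply Complex.ext <;>
    simp [tauQ, pow_two, hi, hj, hk] <;> ring

/-- The rational function `|a + b⬝q|⁻² (a + b⬝q)⁻¹` is `1`-regular: each column of
`G(q) = |a + b⬝q|⁻² • (τ(a + b⬝q))⁻¹` satisfies the two `1`-Cauchy–Fueter equations in
each quaternionic variable `q_l`, at every point where `a + b⬝q ≠ 0`. -/
theorem Gmap_is_one_regular {n : ℕ} (hn : 1 ≤ n) (a : Quaternion ℝ)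
    (b : Fin n → Quaternion ℝ) (q : Fin n → Quaternion ℝ)
    (hq : a + ∑ j, b j * q j ≠ 0) (l : Fin n) (C : Fin 2) :
    (pd l 1 (fun w => Gmap a b w 1 C) q
        + Complex.I * pd l (⟨0, 1, 0, 0⟩ : Quaternion ℝ) (fun w => Gmap a b w 1 C) q
        + pd l (⟨0, 0, 1, 0⟩ : Quaternion ℝ) (fun w => Gmap a b w 0 C) q
        + Complex.I * pd l (⟨0, 0, 0, 1⟩ : Quaternion ℝ) (fun w => Gmap a b w 0 C) q
        = 0) ∧
      (pd l (⟨0, 0, 1, 0⟩ : Quaternion ℝ) (fun w => Gmap a b w 1 C) q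
        - Complex.I * pd l (⟨0, 0, 0, 1⟩ : Quaternion ℝ) (fun w => Gmap a b w 1 C) q
        - pd l 1 (fun w => Gmap a b w 0 C) q
        + Complex.I * pd l (⟨0, 1, 0, 0⟩ : Quaternion ℝ) (fun w => Gmap a b w 0 C) q
        = 0) := by
  exact cauchyFueter_of_units a b q hq l C ⟨rfl, rfl, rfl, rfl⟩ ⟨rfl, rfl, rfl, rfl⟩
    ⟨rfl, rfl, rfl, rfl⟩
end
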